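/- For every complex number q with |q| < 1, φ(q³)² = q²·φ(q)·a(q)·φ(q⁹)·a(q⁹) + φ(q)·b(q)·φ(q⁹)·b(q⁹). (This Ramanujan identity is equivalent to the branching rules for the level-1 E₆⁽¹⁾-modules V^{Λ₁} and V^{Λ₆} with respect to F₄⁽¹⁾, Theorem 3.7 of the paper.) -/

import Mathlib

open scoped BigOperators

/-- The Euler function `φ(q) = ∏_{n=1}^∞ (1 - q^n)`. -/
noncomputable def eulerPhi (q : ℂ) : ℂ := ∏' n : ℕ, (1 - q ^ (n + 1))

/-- The first Rogers–Ramanujan series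
`a(q) = ∏_{n=1}^∞ 1/((1 - q^{5n-2})(1 - q^{5n-3}))`. -/
noncomputable def rrA (q : ℂ) : ℂ :=
  ∏' n : ℕ, ((1 - q ^ (5 * n + 3)) * (1 - q ^ (5 * n + 2)))⁻¹

/-- The second Rogers–Ramanujan series
`b(q) = ∏_{n=1}^∞ 1/((1 - q^{5n-1})(1 - q^{5n-4}))`. -/
noncomputable def rrB (q : ℂ) : ℂ :=
  ∏' n : ℕ, ((1 - q ^ (5 * n + 4)) * (1 - q ^ (5 * n + 1)))⁻¹

/-- `G(q) = ∏_{n=1}^∞ (1-q^{15n})(1-q^{15n-7})(1-q^{15n-8})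
          - q ∏_{n=1}^∞ (1-q^{15n})(1-q^{15n-13})(1-q^{15n-2})`. -/
noncomputable def Gf (q : ℂ) : ℂ :=
  (∏' n : ℕ, (1 - q ^ (15 * n + 15)) * (1 - q ^ (15 * n + 8)) * (1 - q ^ (15 * n + 7)))
  - q * ∏' n : ℕ, (1 - q ^ (15 * n + 15)) * (1 - q ^ (15 * n + 2)) * (1 - q ^ (15 * n + 13))

/-- `H(q) = ∏_{n=1}^∞ (1-q^{15n})(1-q^{15n-4})(1-q^{15n-11})
          + q ∏_{n=1}^∞ (1-q^{15n})(1-q^{15n-14})(1-q^{15n-1})`. -/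
noncomputable def Hf (q : ℂ) : ℂ :=
  (∏' n : ℕ, (1 - q ^ (15 * n + 15)) * (1 - q ^ (15 * n + 11)) * (1 - q ^ (15 * n + 4)))
  + q * ∏' n : ℕ, (1 - q ^ (15 * n + 15)) * (1 - q ^ (15 * n + 1)) * (1 - q ^ (15 * n + 14))

open Filter Finset Topology

/-!
The triple product identity turns `φ(q)`, `φ(q) a(q)` and `φ(q) b(q)` into alternating theta
series, so that both sides of the identity become double series. Up to an affine change of
variables each of these is part of one series, in which `(-1) ^ y q ^ ((x ^ 2 + 9 y ^ 2 - 1) / 4)`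
is summed over `x + y` odd: the left side collects a residue class of `x - 9 y` modulo `3`, the
right side two residue classes modulo `5`. The symmetry `(x, y) ↦ (-x, -y)` pairs off residue
classes, and the unpaired class, modulo `3` or `5`, is a product containing a theta series whose
terms cancel in pairs, so it vanishes. Hence both sides are half of the full series.
-/

section QPochhammer

variable {K : Type*} [Field K] {a q : K}

/-- The finite `q`-Pochhammer symbol `(a; q)_n`. -/
def qPochhammer (a q : K) (n : ℕ) : K := ∏ j ∈ range n, (1 - a * q ^ j)

lemma qPochhammer_succ (a q : K) (n : ℕ) :
    qPochhammer a q (n + 1) = qPochhammer a q n * (1 - a * q ^ n) :=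
  prod_range_succ ..

lemma qPochhammer_mul_eq_prod (a q : K) (m n : ℕ) :
    qPochhammer a q (m * n) = ∏ r ∈ range m, qPochhammer (a * q ^ r) (q ^ m) n := by
  induction n with
  | zero => simp [qPochhammer]
  | succ n ih =>
    simp only [qPochhammer_succ, prod_mul_distrib, ← ih]
    rw [mul_add_one, qPochhammer, prod_range_add, ← qPochhammer]
    congr! 3 with r
    ring

lemma one_sub_pow_ne_zero_of_not_isOfFinOrder (hq : ¬IsOfFinOrder q) {n : ℕ} (hn : n ≠ 0) :
    1 - q ^ n ≠ 0 := fun h ↦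
  hq <| isOfFinOrder_iff_pow_eq_one.mpr ⟨n, hn.bot_lt, (sub_eq_zero.mp h).symm⟩

lemma qPochhammer_self_ne_zero (hq : ¬IsOfFinOrder q) (n : ℕ) : qPochhammer q q n ≠ 0 :=
  prod_ne_zero_iff.mpr fun j _ ↦ by
    simpa only [pow_succ'] using one_sub_pow_ne_zero_of_not_isOfFinOrder hq j.succ_ne_zero

/-- The reciprocal `1 / (q; q)_m`, extended by `0` to negative `m`: with this convention
`q`-binomial coefficients vanish outside their range. -/
def qPochhammerInv (q : K) (m : ℤ) : K := if 0 ≤ m then (qPochhammer q q m.toNat)⁻¹ else 0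

lemma qPochhammerInv_natCast (q : K) (n : ℕ) :
    qPochhammerInv q n = (qPochhammer q q n)⁻¹ := by
  simp [qPochhammerInv]

lemma qPochhammerInv_of_neg (q : K) {m : ℤ} (hm : m < 0) : qPochhammerInv q m = 0 :=
  if_neg hm.not_ge

lemma qPochhammerInv_sub_one (hq : ¬IsOfFinOrder q) (m : ℤ) :
    qPochhammerInv q (m - 1) = (1 - q ^ m) * qPochhammerInv q m := by
  rcases lt_trichotomy m 0 with hm | rfl | hm
  · rw [qPochhammerInv_of_neg q hm, qPochhammerInv_of_neg q (by lia), mul_zero]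
  · rw [qPochhammerInv_of_neg q (by lia), zpow_zero, sub_self, zero_mul]
  · obtain ⟨n, rfl⟩ : ∃ n : ℕ, m = (n + 1 : ℕ) := ⟨(m - 1).toNat, by lia⟩
    rw [qPochhammerInv_natCast, show ((n + 1 : ℕ) : ℤ) - 1 = n by lia, qPochhammerInv_natCast,
      zpow_natCast, qPochhammer_succ, ← pow_succ']
    have := one_sub_pow_ne_zero_of_not_isOfFinOrder hq n.succ_ne_zero
    have := qPochhammer_self_ne_zero hq n
    field_simp

/-- The `q`-binomial coefficient `2 N` choose `N + k`, which vanishes for `N < |k|`. -/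
def centralQBinom (q : K) (N : ℕ) (k : ℤ) : K :=
  qPochhammer q q (2 * N) * qPochhammerInv q (N - k) * qPochhammerInv q (N + k)

lemma centralQBinom_zero (q : K) (k : ℤ) : centralQBinom q 0 k = if k = 0 then 1 else 0 := by
  rcases lt_trichotomy k 0 with hk | rfl | hk
  · simp [centralQBinom, hk.ne, qPochhammerInv_of_neg q hk]
  · simp [centralQBinom, qPochhammerInv, qPochhammer]
  · simp [centralQBinom, hk.ne', qPochhammerInv_of_neg q (neg_lt_zero.mpr hk)]

lemma centralQBinom_succ (h0 : q ≠ 0) (hq : ¬IsOfFinOrder q) (N : ℕ) (k : ℤ) :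
    centralQBinom q (N + 1) k =
      (1 + q ^ (2 * N + 1)) * centralQBinom q N k
        + q ^ ((N : ℤ) + 1 - k) * centralQBinom q N (k - 1)
        + q ^ ((N : ℤ) + 1 + k) * centralQBinom q N (k + 1) := by
  have hsub := qPochhammerInv_sub_one hq (N + 1 - k)
  have hadd := qPochhammerInv_sub_one hq (N + 1 + k)
  have hsub' := qPochhammerInv_sub_one hq (N - k)
  have hadd' := qPochhammerInv_sub_one hq (N + k)
  rw [show (N : ℤ) + 1 - k - 1 = N - k by ring] at hsub
  rw [show (N : ℤ) + 1 + k - 1 = N + k by ring] at hadd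
  have hpow : q ^ ((N : ℤ) + 1 - k) = q ^ ((N : ℤ) - k) * q := by
    rw [← zpow_add_one₀ h0]; ring_nf
  have hpow' : q ^ ((N : ℤ) + 1 + k) = q ^ ((N : ℤ) + k) * q := by
    rw [← zpow_add_one₀ h0]; ring_nf
  have hprod : q ^ (2 * N) = q ^ ((N : ℤ) - k) * q ^ ((N : ℤ) + k) := by
    rw [← zpow_add₀ h0, ← zpow_natCast]; push_cast; ring_nf
  simp only [centralQBinom, mul_add_one, qPochhammer_succ, Nat.cast_succ, pow_succ, hprod,
    show (N : ℤ) - (k - 1) = N + 1 - k by ring, show (N : ℤ) + (k - 1) = N + k - 1 by ring,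
    show (N : ℤ) - (k + 1) = N - k - 1 by ring, show (N : ℤ) + (k + 1) = N + 1 + k by ring,
    hsub', hadd', hsub, hadd, hpow, hpow']
  ring

/-- The `k`-th term of the alternating Jacobi theta series `∑ (-1) ^ k q ^ (k ^ 2) z ^ k`. -/
def thetaTerm (q z : K) (k : ℤ) : K := (-1) ^ k * q ^ k ^ 2 * z ^ k

lemma thetaTerm_pow_pow (hq : q ≠ 0) (m c : ℕ) (k : ℤ) :
    thetaTerm (q ^ m) (q ^ c) k = (-1) ^ k * q ^ (m * k ^ 2 + c * k) := by
  rw [thetaTerm, zpow_add₀ hq, zpow_mul, zpow_mul, zpow_natCast, zpow_natCast, mul_assoc]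

lemma thetaTerm_add_one {z : K} (hq : q ≠ 0) (hz : z ≠ 0) (k : ℤ) :
    thetaTerm q z (k + 1) = -(z * q * (q ^ 2) ^ k) * thetaTerm q z k := by
  have hsq : q ^ (k + 1) ^ 2 = q ^ k ^ 2 * (q ^ 2) ^ k * q := by
    rw [← zpow_natCast q 2, ← zpow_mul, ← zpow_add₀ hq, ← zpow_add_one₀ hq]
    congr 1
    push_cast
    ring
  rw [thetaTerm, thetaTerm, hsq, zpow_add_one₀ hz, zpow_add_one₀ (neg_ne_zero.mpr one_ne_zero)]
  ring

lemma centralQBinom_succ_mul_thetaTerm {z : K} (h0 : q ≠ 0) (hz : z ≠ 0)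
    (hq : ¬IsOfFinOrder (q ^ 2)) (N : ℕ) (k : ℤ) :
    centralQBinom (q ^ 2) (N + 1) k * thetaTerm q z k =
      (1 + (q ^ 2) ^ (2 * N + 1)) * (centralQBinom (q ^ 2) N k * thetaTerm q z k)
        - z * q * (q ^ 2) ^ N * (centralQBinom (q ^ 2) N (k - 1) * thetaTerm q z (k - 1))
        - z⁻¹ * q * (q ^ 2) ^ N * (centralQBinom (q ^ 2) N (k + 1) * thetaTerm q z (k + 1)) := by
  have hq2 : q ^ 2 ≠ 0 := pow_ne_zero 2 h0
  have hpred : thetaTerm q z k = -(z * q * (q ^ 2) ^ (k - 1)) * thetaTerm q z (k - 1) := by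
    simpa only [sub_add_cancel] using thetaTerm_add_one h0 hz (k - 1)
  have hsub : (q ^ 2) ^ ((N : ℤ) + 1 - k) * (q ^ 2) ^ (k - 1) = (q ^ 2) ^ N := by
    rw [← zpow_add₀ hq2, ← zpow_natCast (q ^ 2) N]; ring_nf
  have hadd : (q ^ 2) ^ ((N : ℤ) + 1 + k) = (q ^ 2) ^ N * q ^ 2 * (q ^ 2) ^ k := by
    rw [zpow_add₀ hq2, zpow_add_one₀ hq2, zpow_natCast]
  rw [centralQBinom_succ hq2 hq, thetaTerm_add_one h0 hz k, hadd]
  linear_combination (q ^ 2) ^ ((N : ℤ) + 1 - k) * centralQBinom (q ^ 2) N (k - 1) * hpred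
    - z * q * centralQBinom (q ^ 2) N (k - 1) * thetaTerm q z (k - 1) * hsub
    - (q ^ 2) ^ N * q ^ 2 * (q ^ 2) ^ k * centralQBinom (q ^ 2) N (k + 1) * thetaTerm q z k
      * mul_inv_cancel₀ hz

theorem hasSum_centralQBinom_mul_thetaTerm [TopologicalSpace K] [IsTopologicalRing K] {z : K}
    (h0 : q ≠ 0) (hz : z ≠ 0) (hq : ¬IsOfFinOrder q) (N : ℕ) :
    HasSum (fun k : ℤ ↦ centralQBinom (q ^ 2) N k * thetaTerm q z k)
      (qPochhammer (z * q) (q ^ 2) N * qPochhammer (z⁻¹ * q) (q ^ 2) N) := by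
  have hq2 : ¬IsOfFinOrder (q ^ 2) := by simpa [isOfFinOrder_pow] using hq
  induction N with
  | zero =>
    simpa [centralQBinom_zero, qPochhammer, thetaTerm] using
      hasSum_single (f := fun k : ℤ ↦ centralQBinom (q ^ 2) 0 k * thetaTerm q z k) 0
        fun k hk ↦ by simp [centralQBinom_zero, hk]
  | succ N ih =>
    have hpred := (Equiv.subRight (1 : ℤ)).hasSum_iff.mpr ih
    have hsucc := (Equiv.addRight (1 : ℤ)).hasSum_iff.mpr ih
    simp only [centralQBinom_succ_mul_thetaTerm h0 hz hq2 N]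
    set P := qPochhammer (z * q) (q ^ 2) N * qPochhammer (z⁻¹ * q) (q ^ 2) N with hP
    have hval : qPochhammer (z * q) (q ^ 2) (N + 1) * qPochhammer (z⁻¹ * q) (q ^ 2) (N + 1) =
        (1 + (q ^ 2) ^ (2 * N + 1)) * P - z * q * (q ^ 2) ^ N * P - z⁻¹ * q * (q ^ 2) ^ N * P := by
      rw [qPochhammer_succ, qPochhammer_succ, hP]
      linear_combination P * (q * (q ^ 2) ^ N) ^ 2 * mul_inv_cancel₀ hz
    rw [hval]
    exact ((ih.mul_left _).sub (hpred.mul_left _)).sub (hsucc.mul_left _)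

end QPochhammer

section QPochhammerInf

variable {a q : ℂ}

/-- The infinite `q`-Pochhammer symbol `(a; q)_∞`. -/
noncomputable def qPochhammerInf (a q : ℂ) : ℂ := ∏' n : ℕ, (1 - a * q ^ n)

lemma eulerPhi_eq_qPochhammerInf (q : ℂ) : eulerPhi q = qPochhammerInf q q := by
  simp only [eulerPhi, qPochhammerInf, pow_succ']

lemma summable_norm_mul_pow (a : ℂ) (hq : ‖q‖ < 1) : Summable fun n : ℕ ↦ ‖-(a * q ^ n)‖ := by
  simpa using (summable_geometric_of_lt_one (norm_nonneg q) hq).mul_left ‖a‖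

lemma multipliable_one_sub_mul_pow (a : ℂ) (hq : ‖q‖ < 1) :
    Multipliable fun n : ℕ ↦ 1 - a * q ^ n := by
  simpa only [sub_eq_add_neg] using
    multipliable_one_add_of_summable (summable_norm_mul_pow a hq)

lemma qPochhammerInf_ne_zero (hq : ‖q‖ < 1) (ha : ∀ n : ℕ, a * q ^ n ≠ 1) :
    qPochhammerInf a q ≠ 0 := by
  simpa only [qPochhammerInf, sub_eq_add_neg] using
    tprod_one_add_ne_zero_of_summable
      (fun n ↦ by simpa only [← sub_eq_add_neg] using sub_ne_zero.mpr (ha n).symm)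
      (summable_norm_mul_pow a hq)

lemma qPochhammerInf_ne_zero_of_norm_lt_one (hq : ‖q‖ < 1) (ha : ‖a‖ < 1) :
    qPochhammerInf a q ≠ 0 :=
  qPochhammerInf_ne_zero hq fun n h ↦ by
    have : ‖a * q ^ n‖ < 1 := by
      rw [norm_mul, norm_pow]
      exact mul_lt_one_of_nonneg_of_lt_one_left (norm_nonneg a) ha
        (pow_le_one₀ (norm_nonneg q) hq.le)
    simp [h] at this

lemma tendsto_qPochhammer (a : ℂ) (hq : ‖q‖ < 1) :
    Tendsto (qPochhammer a q) atTop (𝓝 (qPochhammerInf a q)) :=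
  (multipliable_one_sub_mul_pow a hq).hasProd.tendsto_prod_nat

lemma norm_pow_lt_one (hq : ‖q‖ < 1) {n : ℕ} (hn : n ≠ 0) : ‖q ^ n‖ < 1 := by
  simpa using pow_lt_one₀ (norm_nonneg q) hq hn

lemma qPochhammerInf_eq_prod (a : ℂ) (hq : ‖q‖ < 1) {m : ℕ} (hm : m ≠ 0) :
    qPochhammerInf a q = ∏ r ∈ range m, qPochhammerInf (a * q ^ r) (q ^ m) := by
  refine tendsto_nhds_unique
    ((tendsto_qPochhammer a hq).comp (tendsto_id.const_mul_atTop' hm.bot_lt)) ?_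
  simp only [Function.comp_def, id, qPochhammer_mul_eq_prod]
  exact tendsto_finsetProd _ fun r _ ↦ tendsto_qPochhammer _ (norm_pow_lt_one hq hm)

lemma tprod_inv_eq_qPochhammerInf_inv (hq : ‖q‖ < 1) {m i j : ℕ} (hm : m ≠ 0) (hi : i ≠ 0)
    (hj : j ≠ 0) :
    ∏' n : ℕ, ((1 - q ^ (m * n + i)) * (1 - q ^ (m * n + j)))⁻¹ =
      (qPochhammerInf (q ^ i) (q ^ m) * qPochhammerInf (q ^ j) (q ^ m))⁻¹ := by
  have hqm := norm_pow_lt_one hq hm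
  have hmul := (multipliable_one_sub_mul_pow (q ^ i) hqm).tprod_mul
    (multipliable_one_sub_mul_pow (q ^ j) hqm)
  have hne := mul_ne_zero
    (qPochhammerInf_ne_zero_of_norm_lt_one hqm (norm_pow_lt_one hq hi))
    (qPochhammerInf_ne_zero_of_norm_lt_one hqm (norm_pow_lt_one hq hj))
  simp only [qPochhammerInf] at hne ⊢
  rw [← hmul] at hne ⊢
  rw [← ((multipliable_one_sub_mul_pow _ hqm).mul
    (multipliable_one_sub_mul_pow _ hqm)).tprod_inv₀ hne]
  congr! 5 <;> ring

lemma eulerPhi_eq_prod (hq : ‖q‖ < 1) {m : ℕ} (hm : m ≠ 0) :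
    eulerPhi q = ∏ r ∈ range m, qPochhammerInf (q ^ (r + 1)) (q ^ m) := by
  simp only [eulerPhi_eq_qPochhammerInf, qPochhammerInf_eq_prod q hq hm, ← pow_succ']

lemma eulerPhi_mul_rrA (hq : ‖q‖ < 1) :
    eulerPhi q * rrA q = qPochhammerInf (q ^ 5) (q ^ 5) * qPochhammerInf (q ^ 4) (q ^ 5) *
      qPochhammerInf (q ^ 1) (q ^ 5) := by
  have hq5 := norm_pow_lt_one hq (n := 5) (by lia)
  have htwo := qPochhammerInf_ne_zero_of_norm_lt_one hq5 (norm_pow_lt_one hq two_ne_zero)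
  have hthree := qPochhammerInf_ne_zero_of_norm_lt_one hq5 (norm_pow_lt_one hq three_ne_zero)
  rw [eulerPhi_eq_prod hq (m := 5) (by lia), rrA,
    tprod_inv_eq_qPochhammerInf_inv hq (by lia) three_ne_zero two_ne_zero]
  simp only [prod_range_succ, prod_range_zero, zero_add, Nat.reduceAdd]
  field_simp

lemma eulerPhi_mul_rrB (hq : ‖q‖ < 1) :
    eulerPhi q * rrB q = qPochhammerInf (q ^ 5) (q ^ 5) * qPochhammerInf (q ^ 3) (q ^ 5) *
      qPochhammerInf (q ^ 2) (q ^ 5) := by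
  have hq5 := norm_pow_lt_one hq (n := 5) (by lia)
  have hone := qPochhammerInf_ne_zero_of_norm_lt_one hq5 hq
  have hfour := qPochhammerInf_ne_zero_of_norm_lt_one hq5 (norm_pow_lt_one hq four_ne_zero)
  rw [eulerPhi_eq_prod hq (m := 5) (by lia), rrB,
    tprod_inv_eq_qPochhammerInf_inv hq (by lia) four_ne_zero one_ne_zero]
  simp only [prod_range_succ, prod_range_zero, zero_add, Nat.reduceAdd]
  field_simp

end QPochhammerInf

section JacobiTripleProduct

variable {q z : ℂ}

lemma not_isOfFinOrder_of_norm_lt_one (hq : ‖q‖ < 1) : ¬IsOfFinOrder q := by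
  rw [isOfFinOrder_iff_pow_eq_one]
  rintro ⟨n, hn, h⟩
  exact hq.ne (Complex.norm_eq_one_of_pow_eq_one h hn.ne')

lemma tendsto_inv_qPochhammer_self (hq : ‖q‖ < 1) :
    Tendsto (fun n ↦ (qPochhammer q q n)⁻¹) atTop (𝓝 (qPochhammerInf q q)⁻¹) :=
  (tendsto_qPochhammer q hq).inv₀ (qPochhammerInf_ne_zero_of_norm_lt_one hq hq)

lemma tendsto_qPochhammerInv (hq : ‖q‖ < 1) :
    Tendsto (qPochhammerInv q) atTop (𝓝 (qPochhammerInf q q)⁻¹) := by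
  have htoNat : Tendsto Int.toNat atTop atTop :=
    tendsto_atTop.mpr fun n ↦ (eventually_ge_atTop (n : ℤ)).mono fun m hm ↦ by lia
  refine ((tendsto_inv_qPochhammer_self hq).comp htoNat).congr' ?_
  filter_upwards [eventually_ge_atTop 0] with m hm
  simp [qPochhammerInv, hm]

lemma exists_norm_qPochhammerInv_le (hq : ‖q‖ < 1) : ∃ C, ∀ m, ‖qPochhammerInv q m‖ ≤ C := by
  obtain ⟨C, hC⟩ := (tendsto_inv_qPochhammer_self hq).norm.bddAbove_range
  have hC' (n : ℕ) : ‖(qPochhammer q q n)⁻¹‖ ≤ C := hC ⟨n, rfl⟩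
  refine ⟨C, fun m ↦ ?_⟩
  rw [qPochhammerInv]
  split_ifs
  · exact hC' _
  · simpa using (norm_nonneg _).trans (hC' 0)

lemma tendsto_centralQBinom (hq : ‖q‖ < 1) (k : ℤ) :
    Tendsto (fun N ↦ centralQBinom q N k) atTop (𝓝 (qPochhammerInf q q)⁻¹) := by
  have hnum : Tendsto (fun N ↦ qPochhammer q q (2 * N)) atTop (𝓝 (qPochhammerInf q q)) :=
    (tendsto_qPochhammer q hq).comp (tendsto_id.const_mul_atTop' two_pos)
  have hden (j : ℤ) :
      Tendsto (fun N : ℕ ↦ qPochhammerInv q (N + j)) atTop (𝓝 (qPochhammerInf q q)⁻¹) :=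
    (tendsto_qPochhammerInv hq).comp
      (tendsto_atTop_add_const_right _ j tendsto_natCast_atTop_atTop)
  have h := (hnum.mul (hden (-k))).mul (hden k)
  rwa [mul_inv_cancel₀ (qPochhammerInf_ne_zero_of_norm_lt_one hq hq), one_mul] at h

lemma exists_norm_centralQBinom_le (hq : ‖q‖ < 1) :
    ∃ C, ∀ N k, ‖centralQBinom q N k‖ ≤ C := by
  obtain ⟨C, hC⟩ := exists_norm_qPochhammerInv_le hq
  obtain ⟨D, hD⟩ := (tendsto_qPochhammer q hq).norm.bddAbove_range
  have hD' (n : ℕ) : ‖qPochhammer q q n‖ ≤ D := hD ⟨n, rfl⟩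
  have hC0 : 0 ≤ C := (norm_nonneg _).trans (hC 0)
  have hD0 : 0 ≤ D := (norm_nonneg _).trans (hD' 0)
  refine ⟨D * C * C, fun N k ↦ ?_⟩
  rw [centralQBinom, norm_mul, norm_mul]
  gcongr
  exacts [hD' _, hC _, hC _]

lemma summable_norm_thetaTerm (h0 : q ≠ 0) (hq : ‖q‖ < 1) (hz : z ≠ 0) :
    Summable fun k ↦ ‖thetaTerm q z k‖ := by
  let τ : ℂ := (-Real.log ‖q‖ / Real.pi : ℝ) * Complex.I
  let v : ℂ := (-Real.log ‖z‖ / (2 * Real.pi) : ℝ) * Complex.I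
  have hτ : 0 < τ.im := by
    simpa [τ, -Complex.ofReal_div] using
      div_pos (neg_pos.mpr (Real.log_neg (norm_pos_iff.mpr h0) hq)) Real.pi_pos
  have hterm (k : ℤ) : ‖jacobiTheta₂_term k v τ‖ = ‖thetaTerm q z k‖ := by
    have hexp : -Real.pi * k ^ 2 * τ.im - 2 * Real.pi * k * v.im =
        Real.log ‖q‖ * (k ^ 2 : ℤ) + Real.log ‖z‖ * k := by
      simp only [τ, v, Complex.im_ofReal_mul, Complex.I_im, Int.cast_pow]
      field_simp
      ring
    rw [norm_jacobiTheta₂_term, hexp, Real.exp_add, ← Real.rpow_def_of_pos (norm_pos_iff.mpr h0),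
      ← Real.rpow_def_of_pos (norm_pos_iff.mpr hz), Real.rpow_intCast, Real.rpow_intCast]
    simp [thetaTerm]
  simpa only [hterm] using ((summable_jacobiTheta₂_term_iff v τ).mpr hτ).norm

theorem qPochhammerInf_mul_mul_eq_tsum_thetaTerm (h0 : q ≠ 0) (hq : ‖q‖ < 1) (hz : z ≠ 0) :
    qPochhammerInf (q ^ 2) (q ^ 2) * qPochhammerInf (z * q) (q ^ 2) *
      qPochhammerInf (z⁻¹ * q) (q ^ 2) = ∑' k, thetaTerm q z k := by
  have hq2 := norm_pow_lt_one hq two_ne_zero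
  have hprod : Tendsto
      (fun N ↦ qPochhammer (z * q) (q ^ 2) N * qPochhammer (z⁻¹ * q) (q ^ 2) N) atTop
      (𝓝 (qPochhammerInf (z * q) (q ^ 2) * qPochhammerInf (z⁻¹ * q) (q ^ 2))) :=
    (tendsto_qPochhammer _ hq2).mul (tendsto_qPochhammer _ hq2)
  obtain ⟨C, hC⟩ := exists_norm_centralQBinom_le hq2
  have hsum : Tendsto (fun N ↦ ∑' k, centralQBinom (q ^ 2) N k * thetaTerm q z k) atTop
      (𝓝 (∑' k, (qPochhammerInf (q ^ 2) (q ^ 2))⁻¹ * thetaTerm q z k)) := by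
    refine tendsto_tsum_of_dominated_convergence
      ((summable_norm_thetaTerm h0 hq hz).mul_left C)
      (fun k ↦ (tendsto_centralQBinom hq2 k).mul_const _) (.of_forall fun N k ↦ ?_)
    rw [norm_mul]
    exact mul_le_mul_of_nonneg_right (hC N k) (norm_nonneg _)
  have hfinite (N : ℕ) := (hasSum_centralQBinom_mul_thetaTerm h0 hz
    (not_isOfFinOrder_of_norm_lt_one hq) N).tsum_eq
  simp only [hfinite, tsum_mul_left] at hsum
  rw [mul_assoc, tendsto_nhds_unique hprod hsum,
    mul_inv_cancel_left₀ (qPochhammerInf_ne_zero_of_norm_lt_one hq2 hq2)]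

end JacobiTripleProduct

lemma tsum_eq_sum_tsum_mul_add {β E : Type*} [AddCommGroup E] [UniformSpace E]
    [IsUniformAddGroup E] [CompleteSpace E] [T0Space E] {F : ℤ × β → E} (hF : Summable F) (n : ℕ)
    [NeZero n] : ∑' x, F x = ∑ r ∈ range n, ∑' x : ℤ × β, F (n * x.1 + r, x.2) := by
  let e : Fin n × (ℤ × β) ≃ ℤ × β := (Equiv.prodAssoc ..).symm.trans
    (((Equiv.prodComm ..).trans (Int.divModEquiv n).symm).prodCongr (.refl β))
  have he (r : Fin n) (x : ℤ × β) : e (r, x) = (n * x.1 + (r : ℕ), x.2) := by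
    simp [e, Int.divModEquiv, mul_comm]
  rw [← e.tsum_eq F, (e.summable_iff.mpr hF).tsum_prod (f := fun y ↦ F (e y)), tsum_fintype,
    sum_range]
  simp only [he]

lemma tsum_eq_zero_of_involutive {α E : Type*} [AddCommGroup E] [IsAddTorsionFree E]
    [TopologicalSpace E] [IsTopologicalAddGroup E] [T2Space E] {f : α → E} {σ : α → α}
    (hσ : σ.Involutive) (hf : ∀ x, f (σ x) = -f x) : ∑' x, f x = 0 := by
  have h : ∑' x, f (σ x) = ∑' x, f x := hσ.toPerm.tsum_eq f
  rwa [funext hf, tsum_neg, neg_eq_self] at h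

lemma neg_one_zpow_eq_of_even_sub {K : Type*} [DivisionRing K] {m n : ℤ} (h : Even (m - n)) :
    (-1 : K) ^ m = (-1) ^ n := by
  rw [← sub_add_cancel m n, zpow_add₀ (by simp), h.neg_one_zpow, one_mul]

lemma neg_one_zpow_eq_neg_of_odd_sub {K : Type*} [DivisionRing K] {m n : ℤ} (h : Odd (m - n)) :
    (-1 : K) ^ m = -(-1) ^ n := by
  rw [← sub_add_cancel m n, zpow_add₀ (by simp), h.neg_one_zpow, neg_one_mul]

section ThetaSeries

variable {s : ℂ}

/-- The theta series `∑ (-1) ^ k q ^ ((m k ^ 2 + c k) / 2)`, where `k` runs over the integers, as a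
function of a square root `s` of `q`, so that half-integral exponents do not occur. -/
noncomputable def thetaSeries (m c : ℕ) (s : ℂ) : ℂ := ∑' k, thetaTerm (s ^ m) (s ^ c) k

lemma thetaSeries_pow_mul_thetaSeries_pow (h0 : s ≠ 0) (hs : ‖s‖ < 1) {m m' a b : ℕ} (hm : m ≠ 0)
    (hm' : m' ≠ 0) (ha : a ≠ 0) (hb : b ≠ 0) (c c' : ℕ) :
    thetaSeries m c (s ^ a) * thetaSeries m' c' (s ^ b) =
      ∑' x : ℤ × ℤ, (-1) ^ (x.1 + x.2) *
        s ^ (a * (m * x.1 ^ 2 + c * x.1) + b * (m' * x.2 ^ 2 + c' * x.2)) := by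
  have hsummable {m d : ℕ} (hm : m ≠ 0) (hd : d ≠ 0) (c : ℕ) :=
    summable_norm_thetaTerm (pow_ne_zero m (pow_ne_zero d h0))
      (norm_pow_lt_one (norm_pow_lt_one hs hd) hm) (pow_ne_zero c (pow_ne_zero d h0))
  rw [thetaSeries, thetaSeries,
    tsum_mul_tsum_of_summable_norm (hsummable hm ha c) (hsummable hm' hb c')]
  congr! 2 with x
  rw [thetaTerm_pow_pow (pow_ne_zero a h0), thetaTerm_pow_pow (pow_ne_zero b h0),
    zpow_add₀ h0, zpow_add₀ (a := (-1 : ℂ)) (by simp), zpow_mul s a, zpow_mul s b,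
    zpow_natCast, zpow_natCast]
  ring

lemma thetaSeries_self (h0 : s ≠ 0) (m : ℕ) : thetaSeries m m s = 0 :=
  tsum_eq_zero_of_involutive (σ := (-1 - ·)) (sub_sub_cancel _) fun k ↦ by
    rw [thetaTerm_pow_pow h0, thetaTerm_pow_pow h0,
      neg_one_zpow_eq_neg_of_odd_sub (m := -1 - k) (n := k) ⟨-1 - k, by ring⟩, neg_mul]
    congr 3
    ring

lemma qPochhammerInf_mul_mul_eq_thetaSeries (h0 : s ≠ 0) (hs : ‖s‖ < 1) {i j m c : ℕ}
    (hj : j ≠ 0) (hm : i + j = m) (hc : j + c = i) :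
    qPochhammerInf ((s ^ 2) ^ m) ((s ^ 2) ^ m) * qPochhammerInf ((s ^ 2) ^ i) ((s ^ 2) ^ m) *
      qPochhammerInf ((s ^ 2) ^ j) ((s ^ 2) ^ m) = thetaSeries m c s := by
  subst hc hm
  have hinv : (s ^ c)⁻¹ * s ^ (j + c + j) = (s ^ 2) ^ j := by
    rw [← pow_mul, two_mul, add_right_comm, pow_add _ (j + j), mul_comm,
      mul_inv_cancel_right₀ (pow_ne_zero c h0)]
  rw [thetaSeries, ← qPochhammerInf_mul_mul_eq_tsum_thetaTerm (pow_ne_zero _ h0)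
    (norm_pow_lt_one hs (by lia)) (pow_ne_zero c h0), hinv]
  ring_nf

lemma eulerPhi_eq_thetaSeries (h0 : s ≠ 0) (hs : ‖s‖ < 1) :
    eulerPhi (s ^ 2) = thetaSeries 3 1 s := by
  rw [eulerPhi_eq_prod (norm_pow_lt_one hs two_ne_zero) three_ne_zero,
    ← qPochhammerInf_mul_mul_eq_thetaSeries h0 hs (i := 2) (m := 3) one_ne_zero rfl rfl]
  simp only [prod_range_succ, prod_range_zero, one_mul, zero_add, Nat.reduceAdd]
  ring

lemma eulerPhi_mul_rrB_eq_thetaSeries (h0 : s ≠ 0) (hs : ‖s‖ < 1) :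
    eulerPhi (s ^ 2) * rrB (s ^ 2) = thetaSeries 5 1 s := by
  rw [eulerPhi_mul_rrB (norm_pow_lt_one hs two_ne_zero)]
  exact qPochhammerInf_mul_mul_eq_thetaSeries h0 hs two_ne_zero rfl rfl

lemma eulerPhi_mul_rrA_eq_thetaSeries (h0 : s ≠ 0) (hs : ‖s‖ < 1) :
    eulerPhi (s ^ 2) * rrA (s ^ 2) = thetaSeries 5 3 s := by
  rw [eulerPhi_mul_rrA (norm_pow_lt_one hs two_ne_zero)]
  exact qPochhammerInf_mul_mul_eq_thetaSeries h0 hs one_ne_zero rfl rfl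

end ThetaSeries

section LatticeSum

variable {s : ℂ}

/-- The exponent `(x ^ 2 + 9 y ^ 2 - 1) / 2` at the point `(x, y) = (2 t + 1 + 9 k, k)`. The
integers `t` and `k` parametrize the points with `x + y` odd. -/
def latticeExponent (t k : ℤ) : ℤ := 2 * t ^ 2 + 2 * t + 18 * t * k + 45 * k ^ 2 + 9 * k

/-- The terms of the double series `∑ (-1) ^ y q ^ ((x ^ 2 + 9 y ^ 2 - 1) / 4)` over `x + y` odd, as
functions of `s` with `s ^ 2 = q`, in the coordinates of `latticeExponent`. -/
noncomputable def latticeTerm (s : ℂ) (x : ℤ × ℤ) : ℂ := (-1) ^ x.2 * s ^ latticeExponent x.1 x.2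

/-- The part of the double series of `latticeTerm` in which `t` is congruent to `r` modulo `n`; for
odd `n` it collects a residue class of `x - 9 y = 2 t + 1` modulo `n`. -/
noncomputable def latticeSum (s : ℂ) (n r : ℤ) : ℂ :=
  ∑' x : ℤ × ℤ, latticeTerm s (n * x.1 + r, x.2)

lemma summable_latticeTerm (h0 : s ≠ 0) (hs : ‖s‖ < 1) : Summable (latticeTerm s) := by
  obtain ⟨u, rfl⟩ := IsAlgClosed.exists_pow_nat_eq s two_pos
  have hu0 : u ≠ 0 := ne_zero_pow two_ne_zero h0
  have hu : ‖u‖ < 1 := by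
    rwa [norm_pow, pow_lt_one_iff_of_nonneg (norm_nonneg u) two_ne_zero] at hs
  have hprod : Summable fun x : ℤ × ℤ ↦ ‖thetaTerm u 1 x.1 * thetaTerm (u ^ 9) 1 x.2‖ :=
    (summable_norm_thetaTerm hu0 hu one_ne_zero).mul_norm
      (summable_norm_thetaTerm (pow_ne_zero 9 hu0) (norm_pow_lt_one hu (by lia)) one_ne_zero)
  have hinj : Function.Injective fun x : ℤ × ℤ ↦ (2 * x.1 + 1 + 9 * x.2, x.2) := by
    rintro ⟨t, k⟩ ⟨t', k'⟩ h
    simp only [Prod.mk.injEq] at h ⊢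
    lia
  refine .of_norm (((hprod.comp_injective hinj).mul_left ‖u⁻¹‖).congr fun ⟨t, k⟩ ↦ ?_)
  have hpow : (u ^ 2) ^ latticeExponent t k =
      u⁻¹ * (u ^ (2 * t + 1 + 9 * k) ^ 2 * (u ^ 9) ^ k ^ 2) := by
    rw [← zpow_natCast u 2, ← zpow_natCast u 9, ← zpow_mul, ← zpow_mul, ← zpow_add₀ hu0,
      ← zpow_neg_one, ← zpow_add₀ hu0, latticeExponent]
    congr 1
    push_cast
    ring
  simp [latticeTerm, thetaTerm, hpow]

lemma tsum_latticeTerm_eq_sum_latticeSum (h0 : s ≠ 0) (hs : ‖s‖ < 1) (n : ℕ) [NeZero n] :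
    ∑' x, latticeTerm s x = ∑ r ∈ range n, latticeSum s n r :=
  tsum_eq_sum_tsum_mul_add (summable_latticeTerm h0 hs) n

lemma latticeSum_reflect (s : ℂ) (n r : ℤ) : latticeSum s n (n - 1 - r) = latticeSum s n r := by
  rw [latticeSum, ← ((Equiv.subLeft (-1 : ℤ)).prodCongr (Equiv.neg ℤ)).tsum_eq]
  refine tsum_congr fun ⟨p, k⟩ ↦ ?_
  simp only [latticeTerm, latticeExponent, Equiv.prodCongr_apply, Prod.map_apply,
    Equiv.subLeft_apply, Equiv.neg_apply]
  rw [neg_one_zpow_eq_of_even_sub (m := -k) (n := k) ⟨-k, by ring⟩]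
  congr 2
  ring

lemma latticeSum_three (h0 : s ≠ 0) (hs : ‖s‖ < 1) (r : ℕ) :
    latticeSum s 3 r = s ^ (2 * r * (r + 1)) * thetaSeries 3 (2 * r + 1) (s ^ 3) ^ 2 := by
  -- Up to shifts, the new coordinates are `m = (x / 3 + y) / 2` and `n = (x / 3 - y) / 2`, so that
  -- `(x / 3) ^ 2 + y ^ 2 = 2 (m ^ 2 + n ^ 2)`.
  let e : ℤ × ℤ ≃ ℤ × ℤ :=
    { toFun x := (2 * x.2 - x.1, x.1 - x.2)
      invFun x := (x.1 + 2 * x.2, x.1 + x.2)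
      left_inv x := by ext <;> simp only <;> ring
      right_inv x := by ext <;> simp only <;> ring }
  rw [latticeSum, pow_two (thetaSeries ..), thetaSeries_pow_mul_thetaSeries_pow h0 hs
    three_ne_zero three_ne_zero three_ne_zero three_ne_zero, ← tsum_mul_left, ← e.tsum_eq]
  refine tsum_congr fun ⟨m, n⟩ ↦ ?_
  simp only [latticeTerm, latticeExponent, e, Equiv.coe_fn_mk]
  rw [neg_one_zpow_eq_of_even_sub (m := m - n) (n := m + n) ⟨-n, by ring⟩, mul_left_comm,
    ← zpow_natCast s (2 * r * (r + 1)), ← zpow_add₀ h0]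
  congr 2
  push_cast
  ring

lemma latticeSum_five (h0 : s ≠ 0) (hs : ‖s‖ < 1) (r : ℕ) :
    latticeSum s 5 r = s ^ (2 * r * (r + 1)) *
      (thetaSeries 5 (2 * r + 1) s * thetaSeries 5 (2 * r + 1) (s ^ 9)) := by
  have hmul := thetaSeries_pow_mul_thetaSeries_pow h0 hs (m := 5) (m' := 5) (a := 1) (b := 9)
    (by lia) (by lia) (by lia) (by lia) (2 * r + 1) (2 * r + 1)
  rw [pow_one] at hmul
  -- Up to shifts, the new coordinates are `m = (x - 9 y) / 10` and `n = (x + y) / 10`, so that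
  -- `x ^ 2 + 9 y ^ 2 = 10 (m ^ 2 + 9 n ^ 2)`.
  rw [latticeSum, hmul, ← tsum_mul_left,
    ← ((Equiv.refl ℤ).prodShear fun m ↦ .subRight m).tsum_eq]
  refine tsum_congr fun ⟨m, n⟩ ↦ ?_
  simp only [latticeTerm, latticeExponent, Equiv.prodShear_apply, Equiv.refl_apply,
    Equiv.subRight_apply]
  rw [neg_one_zpow_eq_of_even_sub (m := n - m) (n := m + n) ⟨-m, by ring⟩, mul_left_comm,
    ← zpow_natCast s (2 * r * (r + 1)), ← zpow_add₀ h0]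
  congr 2
  push_cast
  ring

theorem thetaSeries_three_one_sq (h0 : s ≠ 0) (hs : ‖s‖ < 1) :
    thetaSeries 3 1 (s ^ 3) ^ 2 =
      s ^ 4 * (thetaSeries 5 3 s * thetaSeries 5 3 (s ^ 9)) +
        thetaSeries 5 1 s * thetaSeries 5 1 (s ^ 9) := by
  have hthree : ∑' x, latticeTerm s x = 2 * thetaSeries 3 1 (s ^ 3) ^ 2 := by
    have hsplit := tsum_latticeTerm_eq_sum_latticeSum h0 hs 3
    have hreflect : latticeSum s 3 (2 : ℕ) = latticeSum s 3 (0 : ℕ) := latticeSum_reflect s 3 0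
    simp only [sum_range_succ, sum_range_zero, Nat.cast_ofNat (n := 3)] at hsplit
    rw [hreflect] at hsplit
    simp only [latticeSum_three h0 hs, thetaSeries_self (pow_ne_zero 3 h0)] at hsplit
    linear_combination hsplit
  have hfive : ∑' x, latticeTerm s x =
      2 * (s ^ 4 * (thetaSeries 5 3 s * thetaSeries 5 3 (s ^ 9)) +
        thetaSeries 5 1 s * thetaSeries 5 1 (s ^ 9)) := by
    have hsplit := tsum_latticeTerm_eq_sum_latticeSum h0 hs 5
    have hreflect : latticeSum s 5 (3 : ℕ) = latticeSum s 5 (1 : ℕ) := latticeSum_reflect s 5 1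
    have hreflect' : latticeSum s 5 (4 : ℕ) = latticeSum s 5 (0 : ℕ) := latticeSum_reflect s 5 0
    simp only [sum_range_succ, sum_range_zero, Nat.cast_ofNat (n := 5)] at hsplit
    rw [hreflect, hreflect'] at hsplit
    simp only [latticeSum_five h0 hs, thetaSeries_self h0] at hsplit
    linear_combination hsplit
  linear_combination (hfive - hthree) / 2

end LatticeSum

theorem branching_V_Lambda1_Lambda6 (q : ℂ) (hq : ‖q‖ < 1) :
    eulerPhi (q ^ 3) ^ 2 =
      q ^ 2 * eulerPhi q * rrA q * eulerPhi (q ^ 9) * rrA (q ^ 9)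
      + eulerPhi q * rrB q * eulerPhi (q ^ 9) * rrB (q ^ 9) := by
  rcases eq_or_ne q 0 with rfl | hq0
  · simp [eulerPhi, rrB]
  obtain ⟨s, rfl⟩ := IsAlgClosed.exists_pow_nat_eq q two_pos
  have h0 : s ≠ 0 := ne_zero_pow two_ne_zero hq0
  have hs : ‖s‖ < 1 := by
    rwa [norm_pow, pow_lt_one_iff_of_nonneg (norm_nonneg s) two_ne_zero] at hq
  have h90 : s ^ 9 ≠ 0 := pow_ne_zero 9 h0
  have hs9 : ‖s ^ 9‖ < 1 := norm_pow_lt_one hs (by lia)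
  have htheta := thetaSeries_three_one_sq h0 hs
  rw [← eulerPhi_eq_thetaSeries (pow_ne_zero 3 h0) (norm_pow_lt_one hs three_ne_zero),
    ← eulerPhi_mul_rrA_eq_thetaSeries h0 hs, ← eulerPhi_mul_rrA_eq_thetaSeries h90 hs9,
    ← eulerPhi_mul_rrB_eq_thetaSeries h0 hs, ← eulerPhi_mul_rrB_eq_thetaSeries h90 hs9,
    pow_right_comm s 3, pow_right_comm s 9] at htheta
  linear_combination htheta
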